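/- Let M be a matroid on a finite ground set E with rank r, let k ≥ 2, and let f : (k+1)^E → ℝ be a (possibly non-monotone) k-submodular function. Then the optimization problem max{ f(p) : p ∈ (k+1)^E, supp(p) independent in M } has an optimal solution whose support is a basis of M, i.e., there exists p* with supp(p*) independent, |supp(p*)| = r, and f(p*) ≥ f(p) for every p with supp(p) independent. -/

import Mathlib

/-- The support of `p : E → Fin (k+1)`: elements assigned a nonzero label. -/
def kSupp {E : Type*} [Fintype E] [DecidableEq E] {k : ℕ}
    (p : E → Fin (k+1)) : Finset E :=
  Finset.univ.filter (fun e => p e ≠ 0)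

/-- The meet `p ⊓ q`. -/
def kInf {E : Type*} {k : ℕ} (p q : E → Fin (k+1)) : E → Fin (k+1) :=
  fun e => if p e = q e then p e else 0

/-- The join `p ⊔ q`. -/
def kSup {E : Type*} {k : ℕ} (p q : E → Fin (k+1)) : E → Fin (k+1) :=
  fun e => if q e = 0 ∨ q e = p e then p e else if p e = 0 then q e else 0

/-- `f` is `k`-submodular. -/
def IsKSubmodular {E : Type*} {k : ℕ} (f : (E → Fin (k+1)) → ℝ) : Prop :=
  ∀ p q, f (kSup p q) + f (kInf p q) ≤ f p + f q

/-- The partial order `p ⪯ q`. -/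
def kLE {E : Type*} {k : ℕ} (p q : E → Fin (k+1)) : Prop :=
  ∀ e, p e ≠ 0 → p e = q e

/-- Marginal gain `Δ_{e,i} f(p) = f(p + i·1_e) − f(p)`. -/
def marg {E : Type*} [DecidableEq E] {k : ℕ}
    (f : (E → Fin (k+1)) → ℝ) (p : E → Fin (k+1)) (e : E) (i : Fin (k+1)) : ℝ :=
  f (Function.update p e i) - f p

/-- Orthant submodularity. -/
def OrthantSubmodular {E : Type*} [DecidableEq E] {k : ℕ}
    (f : (E → Fin (k+1)) → ℝ) : Prop :=
  ∀ (p q : E → Fin (k+1)) (e : E) (i : Fin (k+1)),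
    kLE p q → q e = 0 → i ≠ 0 → marg f q e i ≤ marg f p e i

/-- Pairwise monotonicity. -/
def PairwiseMonotone {E : Type*} [DecidableEq E] {k : ℕ}
    (f : (E → Fin (k+1)) → ℝ) : Prop :=
  ∀ (p : E → Fin (k+1)) (e : E) (i j : Fin (k+1)),
    p e = 0 → i ≠ 0 → j ≠ 0 → i ≠ j → 0 ≤ marg f p e i + marg f p e j

/-- Monotonicity of `f` with respect to `⪯`. -/
def KMonotone {E : Type*} {k : ℕ} (f : (E → Fin (k+1)) → ℝ) : Prop :=
  ∀ p q, kLE p q → f p ≤ f q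

/-- maximizing a (possibly non-monotone) `k`-submodular function
(`k ≥ 2`) over independent supports has an optimal solution whose support is a
base (of size the rank `r`). -/
theorem kSubmodular_matroid_max_on_base
    {E : Type*} [Fintype E] [DecidableEq E] {k : ℕ} (hk : 2 ≤ k)
    (M : Matroid E) (r : ℕ) (hr : ∀ B : Set E, M.IsBase B → B.ncard = r)
    (f : (E → Fin (k+1)) → ℝ) (hf : IsKSubmodular f) :
    ∃ p : E → Fin (k+1), M.Indep ↑(kSupp p) ∧ (kSupp p).card = r ∧
      ∀ q : E → Fin (k+1), M.Indep ↑(kSupp q) → f q ≤ f p := by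
  classical
  -- an optimal solution
  have hE : ((Finset.univ : Finset (E → Fin (k+1))).filter
      (fun q => M.Indep ↑(kSupp q))).Nonempty := by
    refine ⟨fun _ => 0, ?_⟩
    simp [kSupp]
  obtain ⟨p₀, hp₀, hmax₀⟩ := Finset.exists_max_image _ f hE
  -- an optimal solution of maximal support
  have hO : ((Finset.univ : Finset (E → Fin (k+1))).filter
      (fun q => M.Indep ↑(kSupp q) ∧ f p₀ ≤ f q)).Nonempty := by
    refine ⟨p₀, ?_⟩
    simpa using hp₀
  obtain ⟨p, hp, hmax⟩ := Finset.exists_max_image _ (fun q => (kSupp q).card) hO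
  simp only [Finset.mem_filter, Finset.mem_univ, true_and] at hp₀ hmax₀ hp hmax
  refine ⟨p, hp.1, ?_, fun q hq => (hmax₀ q hq).trans hp.2⟩
  by_cases hB : M.IsBase ↑(kSupp p)
  · rw [← hr _ hB, Set.ncard_coe_finset]
  exfalso
  obtain ⟨B, hBB⟩ := M.exists_isBase
  obtain ⟨e, he, hins⟩ := hp.1.exists_insert_of_not_isBase hB hBB
  have hpe : p e = 0 := by
    have := he.2
    simpa [kSupp] using this
  have hsupp : ∀ i : Fin (k+1), i ≠ 0 →
      kSupp (Function.update p e i) = insert e (kSupp p) := by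
    intro i hi
    ext x
    by_cases hx : x = e
    · subst hx; simp [kSupp, hi]
    · simp [kSupp, hx]
  have hlt : ∀ i : Fin (k+1), i ≠ 0 → f (Function.update p e i) < f p := by
    intro i hi
    by_contra hcon
    have h := hmax (Function.update p e i)
      ⟨by rw [hsupp i hi]; simpa using hins, hp.2.trans (not_lt.mp hcon)⟩
    rw [hsupp i hi, Finset.card_insert_of_notMem (by simpa using he.2)] at h
    omega
  let i : Fin (k+1) := ⟨1, by omega⟩
  let j : Fin (k+1) := ⟨2, by omega⟩
  have hi : i ≠ 0 := by simp [i, Fin.ext_iff]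
  have hj : j ≠ 0 := by simp [j, Fin.ext_iff]
  have hij : i ≠ j := by simp [i, j]
  have h := hf (Function.update p e i) (Function.update p e j)
  have h1 : kSup (Function.update p e i) (Function.update p e j) = p := by
    ext x
    by_cases hx : x = e
    · subst hx; simp [kSup, hi, hj, hij.symm, hpe]
    · simp [kSup, hx]
  have h2 : kInf (Function.update p e i) (Function.update p e j) = p := by
    ext x
    by_cases hx : x = e
    · subst hx; simp [kInf, hij, hpe]
    · simp [kInf, hx]
  rw [h1, h2] at h
  linarith [hlt i hi, hlt j hj]
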